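/- arXiv:1307.3066 — 4 statements merged into one kernel-verified Lean document; each statement's English description precedes it below -/
import Mathlib

section
/- For every J ∈ Φ_θ, the vectors {s_*λ_α : α ∈ J} in V⁻ = ℝ^{Q₁}/r_*(ℝ^{Q₀}) are linearly independent over ℝ; in particular the cone σ⁻_J is a simplicial cone of dimension equal to the cardinality of J. -/
/-- The quiver is connected: any two vertices are related by the equivalence
relation generated by "there is an arrow between them". -/
def QuiverConnected {Q₀ Q₁ : Type} (src tgt : Q₁ → Q₀) : Prop :=
  ∀ i j : Q₀, Relation.EqvGen (fun i j => ∃ α : Q₁, src α = i ∧ tgt α = j) i j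

/-- The indicator vector of a finite subset of the vertices. -/
def indVec {Q₀ : Type} [DecidableEq Q₀] (I' : Finset Q₀) : Q₀ → ℤ :=
  fun i => if i ∈ I' then 1 else 0

/-- A subset `J ⊆ Q₁` is `θ`-stable if `θ(𝟙_{I'}) > 0` for every nonempty proper
`I' ∈ S(J)`, where `S(J)` consists of the subsets `I' ⊆ Q₀` such that every arrow
`α ∈ J` with source in `I'` has target in `I'`. -/
def StableArrowSet {Q₀ Q₁ : Type} [Fintype Q₀] [DecidableEq Q₀] (src tgt : Q₁ → Q₀)
    (θ : (Q₀ → ℤ) →ₗ[ℤ] ℤ) (J : Finset Q₁) : Prop :=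
  ∀ I' : Finset Q₀, (∀ α ∈ J, src α ∈ I' → tgt α ∈ I') →
    I'.Nonempty → I' ≠ Finset.univ → 0 < θ (indVec I')

/-- `Φ_θ = {J ⊆ Q₁ : Q₁ ∖ J is θ-stable}`. -/
def PhiTheta {Q₀ Q₁ : Type} [Fintype Q₀] [DecidableEq Q₀] [Fintype Q₁] [DecidableEq Q₁]
    (src tgt : Q₁ → Q₀) (θ : (Q₀ → ℤ) →ₗ[ℤ] ℤ) : Set (Finset Q₁) :=
  {J | StableArrowSet src tgt θ Jᶜ}

/-- The linear map `r_* : ℝ^{Q₀} → ℝ^{Q₁}`, `(r_*λ)_α = λ_{tgt α} − λ_{src α}`. -/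
def rMap {Q₀ Q₁ : Type} (src tgt : Q₁ → Q₀) : (Q₀ → ℝ) →ₗ[ℝ] (Q₁ → ℝ) where
  toFun lam := fun α => lam (tgt α) - lam (src α)
  map_add' := by intro x y; funext α; simp; ring
  map_smul' := by intro c x; funext α; simp; ring

/-- `V⁻ = ℝ^{Q₁}/r_*(ℝ^{Q₀})`. -/
abbrev Vminus {Q₀ Q₁ : Type} (src tgt : Q₁ → Q₀) : Type :=
  (Q₁ → ℝ) ⧸ LinearMap.range (rMap src tgt)

/-- The quotient map `s_* : ℝ^{Q₁} → V⁻`. -/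
noncomputable def sMap {Q₀ Q₁ : Type} (src tgt : Q₁ → Q₀) :
    (Q₁ → ℝ) →ₗ[ℝ] Vminus src tgt :=
  (LinearMap.range (rMap src tgt)).mkQ

/-- The standard basis vector `λ_α` of `ℝ^{Q₁}`. -/
noncomputable def lamb {Q₁ : Type} [DecidableEq Q₁] (α : Q₁) : Q₁ → ℝ :=
  Pi.single α 1

/-- For `J ∈ Φ_θ` the vectors `s_*λ_α`, `α ∈ J`, are linearly
independent in `V⁻`; in particular the cone `σ⁻_J` is simplicial of dimension `#J`. -/
theorem stmt1 {Q₀ Q₁ : Type} [Fintype Q₀] [DecidableEq Q₀] [Fintype Q₁] [DecidableEq Q₁]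
    (src tgt : Q₁ → Q₀) (hconn : QuiverConnected src tgt)
    (θ : (Q₀ → ℤ) →ₗ[ℤ] ℤ) (hθ : θ (fun _ => 1) = 0)
    (J : Finset Q₁) (hJ : J ∈ PhiTheta src tgt θ) :
    LinearIndependent ℝ (fun α : {α // α ∈ J} => sMap src tgt (lamb (α : Q₁))) ∧
    Module.finrank ℝ (Submodule.span ℝ
      (Set.range fun α : {α // α ∈ J} => sMap src tgt (lamb (α : Q₁)))) = J.card := by
  have hst : StableArrowSet src tgt θ Jᶜ := hJ
  have hli : LinearIndependent ℝ
      (fun α : {α // α ∈ J} => sMap src tgt (lamb (α : Q₁))) := by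
    rw [Fintype.linearIndependent_iff]
    intro g hg
    have h1 : sMap src tgt (∑ α : {α // α ∈ J}, g α • lamb (α : Q₁)) = 0 := by
      rw [map_sum]
      simpa only [map_smul] using hg
    have h2 : (∑ α : {α // α ∈ J}, g α • lamb (α : Q₁)) ∈ LinearMap.range (rMap src tgt) := by
      unfold sMap at h1
      rwa [Submodule.mkQ_apply, Submodule.Quotient.mk_eq_zero] at h1
    obtain ⟨lam, hlam⟩ := h2
    have hval : ∀ β : Q₁, lam (tgt β) - lam (src β)
        = ∑ α : {α // α ∈ J}, g α * (if β = (α : Q₁) then 1 else 0) := by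
      intro β
      have := congrFun hlam β
      simpa [rMap, lamb, Finset.sum_apply, Pi.single_apply] using this
    have hout : ∀ β ∈ Jᶜ, lam (tgt β) = lam (src β) := by
      intro β hβ
      have hb : β ∉ J := by simpa using hβ
      have h3 := hval β
      rw [Finset.sum_eq_zero] at h3
      · linarith
      · intro α _
        have : β ≠ (α : Q₁) := fun h => hb (h ▸ α.2)
        simp [this]
    have hconst : ∀ i j, lam i = lam j := by
      intro i j
      by_contra hij
      let A : Finset Q₀ := Finset.univ.filter (fun k => lam k = lam j)
      have hA := hst A (by
        intro α hα hs
        simp only [A, Finset.mem_filter, Finset.mem_univ, true_and] at hs ⊢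
        rw [hout α hα, hs]) ⟨j, by simp [A]⟩ (by
        intro h
        have : i ∈ A := h ▸ Finset.mem_univ i
        exact hij (by simpa [A] using this))
      have hB := hst Aᶜ (by
        intro α hα hs
        simp only [A, Finset.mem_compl, Finset.mem_filter, Finset.mem_univ, true_and] at hs ⊢
        rwa [hout α hα]) ⟨i, by simpa [A] using hij⟩ (by
        intro h
        have : j ∈ Aᶜ := h ▸ Finset.mem_univ j
        simp [A] at this)
      have hsum : indVec A + indVec Aᶜ = fun _ => 1 := by
        funext k
        by_cases hk : k ∈ A <;> simp [indVec, hk]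
      have := congrArg θ hsum
      rw [map_add, hθ] at this
      omega
    intro α
    have h4 := hval α
    rw [hconst (tgt α) (src α), sub_self, Finset.sum_eq_single α] at h4
    · simpa using h4.symm
    · intro b _ hb
      have : (α : Q₁) ≠ (b : Q₁) := fun h => hb (Subtype.ext h.symm)
      simp [this]
    · simp
  refine ⟨hli, ?_⟩
  rw [finrank_span_eq_card hli]
  simp
end

section
/- For all J₁, J₂ ∈ Φ_θ, the cones satisfy σ⁻_{J₁} ∩ σ⁻_{J₂} = σ⁻_{J₁ ∩ J₂} in V⁻. -/
/-- The cone `σ⁻_J ⊆ V⁻` spanned by the vectors `s_*λ_α`, `α ∈ J`. -/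
noncomputable def coneOf {Q₀ Q₁ : Type} [Fintype Q₁] [DecidableEq Q₁] (src tgt : Q₁ → Q₀)
    (J : Finset Q₁) : Set (Vminus src tgt) :=
  {x | ∃ a : Q₁ → ℝ, (∀ α, 0 ≤ a α) ∧ x = sMap src tgt (∑ α ∈ J, a α • lamb α)}

/-- For `J₁, J₂ ∈ Φ_θ` one has `σ⁻_{J₁} ∩ σ⁻_{J₂} = σ⁻_{J₁ ∩ J₂}`. -/
theorem stmt2 {Q₀ Q₁ : Type} [Fintype Q₀] [DecidableEq Q₀] [Fintype Q₁] [DecidableEq Q₁]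
    (src tgt : Q₁ → Q₀) (hconn : QuiverConnected src tgt)
    (θ : (Q₀ → ℤ) →ₗ[ℤ] ℤ) (hθ : θ (fun _ => 1) = 0)
    (J₁ J₂ : Finset Q₁) (h₁ : J₁ ∈ PhiTheta src tgt θ) (h₂ : J₂ ∈ PhiTheta src tgt θ) :
    coneOf src tgt J₁ ∩ coneOf src tgt J₂ = coneOf src tgt (J₁ ∩ J₂) := by
  have hsum : ∀ (J : Finset Q₁) (a : Q₁ → ℝ) (β : Q₁),
      (∑ α ∈ J, a α • lamb α) β = if β ∈ J then a β else 0 := by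
    intro J a β
    simp [lamb, Finset.sum_apply, Pi.single_apply]
  ext x
  constructor
  · rintro ⟨⟨a, ha, hxa⟩, ⟨b, hb, hxb⟩⟩
    have hab := hxa.symm.trans hxb
    unfold sMap at hab
    rw [Submodule.mkQ_apply, Submodule.mkQ_apply, Submodule.Quotient.eq] at hab
    obtain ⟨l, hl⟩ := hab
    have key : ∀ β, l (tgt β) - l (src β)
        = (if β ∈ J₁ then a β else 0) - (if β ∈ J₂ then b β else 0) := by
      intro β
      have h := congrFun hl β
      rw [Pi.sub_apply, hsum, hsum] at h
      exact h
    have hle : ∀ i j, ¬ l i < l j := by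
      intro i j hij
      have e1 : 0 < θ (indVec (Finset.univ.filter fun k => l j ≤ l k)) := by
        apply h₂
        · intro β hβ hs
          have hk := key β
          rw [if_neg (Finset.mem_compl.mp hβ)] at hk
          have : 0 ≤ (if β ∈ J₁ then a β else 0) := by
            split_ifs
            · exact ha β
            · exact le_rfl
          simp only [Finset.mem_filter, Finset.mem_univ, true_and] at hs ⊢
          linarith
        · exact ⟨j, by simp⟩
        · intro h
          have := Finset.mem_univ i
          rw [← h] at this
          simp only [Finset.mem_filter, Finset.mem_univ, true_and] at this
          linarith
      have e2 : 0 < θ (indVec (Finset.univ.filter fun k => l k < l j)) := by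
        apply h₁
        · intro β hβ hs
          have hk := key β
          rw [if_neg (Finset.mem_compl.mp hβ)] at hk
          have : 0 ≤ (if β ∈ J₂ then b β else 0) := by
            split_ifs
            · exact hb β
            · exact le_rfl
          simp only [Finset.mem_filter, Finset.mem_univ, true_and] at hs ⊢
          linarith
        · exact ⟨i, by simpa using hij⟩
        · intro h
          have := Finset.mem_univ j
          rw [← h] at this
          simp at this
      have e3 : indVec (Finset.univ.filter fun k => l j ≤ l k)
          + indVec (Finset.univ.filter fun k => l k < l j) = fun _ => 1 := by
        funext k
        rcases lt_or_ge (l k) (l j) with h | h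
        · simp [indVec, h, not_le.mpr h]
        · simp [indVec, h, not_lt.mpr h]
      have e4 := congrArg θ e3
      rw [map_add, hθ] at e4
      omega
    refine ⟨a, ha, ?_⟩
    rw [hxa]
    congr 1
    funext β
    rw [hsum, hsum]
    have hk := key β
    have h1 := hle (tgt β) (src β)
    have h2 := hle (src β) (tgt β)
    by_cases hβ₁ : β ∈ J₁ <;> by_cases hβ₂ : β ∈ J₂ <;> simp [hβ₁, hβ₂] at hk ⊢
    linarith
  · rintro ⟨a, ha, rfl⟩
    refine ⟨⟨fun α => if α ∈ J₂ then a α else 0, ?_, ?_⟩,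
      ⟨fun α => if α ∈ J₁ then a α else 0, ?_, ?_⟩⟩
    · intro α
      dsimp only
      split_ifs
      · exact ha α
      · exact le_rfl
    · congr 1
      funext β
      rw [hsum, hsum]
      by_cases hβ₁ : β ∈ J₁ <;> by_cases hβ₂ : β ∈ J₂ <;> simp [hβ₁, hβ₂]
    · intro α
      dsimp only
      split_ifs
      · exact ha α
      · exact le_rfl
    · congr 1
      funext β
      rw [hsum, hsum]
      by_cases hβ₁ : β ∈ J₁ <;> by_cases hβ₂ : β ∈ J₂ <;> simp [hβ₁, hβ₂]
end

section
/- If J' ⊆ Q₁ satisfies J' ∉ Φ_θ while {α} ∈ Φ_θ for every α ∈ J', then σ⁻_{J'} ≠ σ⁻_J for every J ∈ Φ_θ. -/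
/-- If `J' ∉ Φ_θ` but `{α} ∈ Φ_θ` for every `α ∈ J'`, then
`σ⁻_{J'} ≠ σ⁻_J` for every `J ∈ Φ_θ`. -/
theorem stmt3 {Q₀ Q₁ : Type} [Fintype Q₀] [DecidableEq Q₀] [Fintype Q₁] [DecidableEq Q₁]
    (src tgt : Q₁ → Q₀) (hconn : QuiverConnected src tgt)
    (θ : (Q₀ → ℤ) →ₗ[ℤ] ℤ) (hθ : θ (fun _ => 1) = 0)
    (J' : Finset Q₁) (hJ' : J' ∉ PhiTheta src tgt θ)
    (hsingle : ∀ α ∈ J', ({α} : Finset Q₁) ∈ PhiTheta src tgt θ) :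
    ∀ J ∈ PhiTheta src tgt θ, coneOf src tgt J' ≠ coneOf src tgt J := by
  classical
  intro J hJ heq
  apply hJ'
  have hsub : J' ⊆ J := by
    intro α hα
    by_contra hαJ
    have hmem : sMap src tgt (lamb α) ∈ coneOf src tgt J' := by
      refine ⟨fun γ => if γ = α then 1 else 0, fun γ => by dsimp only; split_ifs <;> norm_num, ?_⟩
      congr 1
      simp [hα]
    rw [heq] at hmem
    obtain ⟨a, ha, hx⟩ := hmem
    have hx' : lamb α - ∑ γ ∈ J, a γ • lamb γ ∈ LinearMap.range (rMap src tgt) := by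
      rw [← Submodule.Quotient.eq]
      exact hx
    obtain ⟨m, hm⟩ := hx'
    have hval : ∀ γ, m (tgt γ) - m (src γ)
        = (if γ = α then 1 else 0) - (if γ ∈ J then a γ else 0) := by
      intro γ
      have := congrFun hm γ
      simpa [rMap, lamb, Finset.sum_apply, Pi.single_apply] using this
    have hα1 : m (tgt α) - m (src α) = 1 := by simpa [hαJ] using hval α
    let I : Finset Q₀ := Finset.univ.filter (fun i => m i ≤ m (src α))
    have hs : src α ∈ I := by simp [I]
    have ht : tgt α ∉ I := by
      simp only [I, Finset.mem_filter, Finset.mem_univ, true_and, not_le]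
      linarith
    have h1 : 0 < θ (indVec I) := by
      refine hsingle α hα I ?_ ⟨_, hs⟩ (fun h => ht (by rw [h]; simp))
      intro γ hγ hsrc
      have hγ' : γ ≠ α := by simpa using hγ
      have hv := hval γ
      have hpos := ha γ
      simp only [I, Finset.mem_filter, Finset.mem_univ, true_and] at hsrc ⊢
      rw [if_neg hγ'] at hv
      split_ifs at hv <;> linarith
    have h2 : 0 < θ (indVec Iᶜ) := by
      refine hJ Iᶜ ?_ ⟨tgt α, by simpa using ht⟩ (fun h => ?_)
      · intro γ hγ hsrc
        have hγ' : γ ∉ J := by simpa using hγ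
        have hv := hval γ
        simp only [I, Finset.mem_compl, Finset.mem_filter, Finset.mem_univ, true_and,
          not_le] at hsrc ⊢
        rw [if_neg hγ'] at hv
        split_ifs at hv <;> linarith
      · have : src α ∈ Iᶜ := by rw [h]; simp
        exact (Finset.mem_compl.mp this) hs
    have hsum : indVec I + indVec Iᶜ = fun _ => 1 := by
      funext i
      by_cases hi : i ∈ I <;> simp [indVec, hi]
    have h3 : θ (indVec I) + θ (indVec Iᶜ) = 0 := by
      rw [← map_add, hsum, hθ]
    linarith
  intro I' hI'
  exact hJ I' (fun γ hγ => hI' γ (by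
    simp only [Finset.mem_compl] at hγ ⊢
    exact fun h => hγ (hsub h)))
end

section
/- For every arrow α₀ ∈ Q₁, the element s_*λ_{α₀} of the quotient group Λ⁻ = ℤ^{Q₁}/r_*(ℤ^{Q₀}) is either zero or primitive, i.e. whenever s_*λ_{α₀} = n·μ with an integer n > 1 and μ ∈ Λ⁻, then s_*λ_{α₀} = 0. Consequently, if {α₀} ∈ Φ_θ (so that s_*λ_{α₀} ≠ 0), then s_*λ_{α₀} is the minimal lattice point on the ray σ⁻_{{α₀}}. -/
/-- The linear map `r_* : ℤ^{Q₀} → ℤ^{Q₁}`, `(r_*λ)_α = λ_{tgt α} − λ_{src α}`. -/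
def rMapZ {Q₀ Q₁ : Type} (src tgt : Q₁ → Q₀) : (Q₀ → ℤ) →ₗ[ℤ] (Q₁ → ℤ) where
  toFun lam := fun α => lam (tgt α) - lam (src α)
  map_add' := by intro x y; funext α; simp; ring
  map_smul' := by intro c x; funext α; simp; ring

/-- `Λ⁻ = ℤ^{Q₁}/r_*(ℤ^{Q₀})`. -/
abbrev LamMinus {Q₀ Q₁ : Type} (src tgt : Q₁ → Q₀) : Type :=
  (Q₁ → ℤ) ⧸ LinearMap.range (rMapZ src tgt)

/-- The quotient map `s_* : ℤ^{Q₁} → Λ⁻`. -/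
def sMapZ {Q₀ Q₁ : Type} (src tgt : Q₁ → Q₀) :
    (Q₁ → ℤ) →ₗ[ℤ] LamMinus src tgt :=
  (LinearMap.range (rMapZ src tgt)).mkQ

/-- The standard basis vector `λ_α` of `ℤ^{Q₁}`. -/
def lambZ {Q₁ : Type} [DecidableEq Q₁] (α : Q₁) : Q₁ → ℤ :=
  Pi.single α 1

theorem exists_cut {Q₀ Q₁ : Type} [Fintype Q₀] [DecidableEq Q₀] [DecidableEq Q₁]
    (src tgt : Q₁ → Q₀) (α₀ : Q₁) (n : ℤ) (hn : 1 < n) (μ : LamMinus src tgt)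
    (h : sMapZ src tgt (lambZ α₀) = n • μ) :
    ∃ I : Finset Q₀, tgt α₀ ∈ I ∧ src α₀ ∉ I ∧ ∀ α, α ≠ α₀ → (src α ∈ I ↔ tgt α ∈ I) := by
  obtain ⟨m, rfl⟩ := Submodule.mkQ_surjective _ μ
  have h2 : lambZ α₀ - n • m ∈ LinearMap.range (rMapZ src tgt) := by
    rw [← Submodule.Quotient.eq]
    exact h
  obtain ⟨l, hl⟩ := h2
  have key : ∀ α, l (tgt α) - l (src α) = (lambZ α₀ : Q₁ → ℤ) α - n * m α := by
    intro α
    have := congrFun hl α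
    simpa [rMapZ] using this
  refine ⟨Finset.univ.filter (fun i => n ∣ l i - l (tgt α₀)), by simp, ?_, ?_⟩
  · simp only [Finset.mem_filter, Finset.mem_univ, true_and]
    intro hd
    have h0 := key α₀
    simp only [lambZ, Pi.single_eq_same] at h0
    have : n ∣ 1 := by
      have e : (1 : ℤ) = n * m α₀ - (l (src α₀) - l (tgt α₀)) := by linarith
      rw [e]
      exact dvd_sub (dvd_mul_right _ _) hd
    have := Int.le_of_dvd one_pos this
    omega
  · intro α hα
    simp only [Finset.mem_filter, Finset.mem_univ, true_and]
    have h0 := key α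
    simp only [lambZ, Pi.single_eq_of_ne hα] at h0
    have e : l (src α) - l (tgt α₀) = (l (tgt α) - l (tgt α₀)) + n * m α := by linarith
    rw [e]
    exact dvd_add_left (dvd_mul_right _ _)

theorem zero_of_cut {Q₀ Q₁ : Type} [Fintype Q₀] [DecidableEq Q₀] [DecidableEq Q₁]
    (src tgt : Q₁ → Q₀) (α₀ : Q₁) (I : Finset Q₀) (h1 : tgt α₀ ∈ I) (h2 : src α₀ ∉ I)
    (h3 : ∀ α, α ≠ α₀ → (src α ∈ I ↔ tgt α ∈ I)) :
    sMapZ src tgt (lambZ α₀) = 0 := by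
  unfold sMapZ
  rw [Submodule.mkQ_apply, Submodule.Quotient.mk_eq_zero]
  refine ⟨indVec I, ?_⟩
  funext α
  by_cases hα : α = α₀
  · subst hα
    simp [rMapZ, indVec, lambZ, h1, h2]
  · simp [rMapZ, indVec, lambZ, h3 α hα, hα]

theorem nonzero_of_phi {Q₀ Q₁ : Type} [Fintype Q₀] [DecidableEq Q₀] [Fintype Q₁] [DecidableEq Q₁]
    (src tgt : Q₁ → Q₀) (θ : (Q₀ → ℤ) →ₗ[ℤ] ℤ) (hθ : θ (fun _ => 1) = 0) (α₀ : Q₁)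
    (h : ({α₀} : Finset Q₁) ∈ PhiTheta src tgt θ) (n : ℤ) (hn : 1 < n) (μ : LamMinus src tgt) :
    sMapZ src tgt (lambZ α₀) ≠ n • μ := by
  intro h0
  obtain ⟨I, h1, h2, h3⟩ := exists_cut src tgt α₀ n hn μ h0
  have a : 0 < θ (indVec I) := by
    refine h I ?_ ⟨_, h1⟩ ?_
    · intro α hα
      exact (h3 α (by simpa using hα)).1
    · rintro rfl
      simp at h2
  have b : 0 < θ (indVec Iᶜ) := by
    refine h Iᶜ ?_ ⟨src α₀, by simpa using h2⟩ ?_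
    · intro α hα
      have := h3 α (by simpa using hα)
      simp [this]
    · intro e
      have : tgt α₀ ∈ Iᶜ := by rw [e]; simp
      simp [h1] at this
  have c : indVec I + indVec Iᶜ = fun _ => 1 := by
    funext i
    by_cases hi : i ∈ I <;> simp [indVec, hi]
  rw [← c, map_add] at hθ
  omega

/-- For every arrow `α₀`, the element `s_*λ_{α₀} ∈ Λ⁻` is either
zero or primitive: if `s_*λ_{α₀} = n·μ` with `n > 1`, then `s_*λ_{α₀} = 0`.
Consequently, if `{α₀} ∈ Φ_θ` then `s_*λ_{α₀}` is nonzero and is not a proper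
integer multiple of a lattice point, i.e. it is the minimal lattice point on the
ray `σ⁻_{{α₀}}`. -/
theorem stmt4 {Q₀ Q₁ : Type} [Fintype Q₀] [DecidableEq Q₀] [Fintype Q₁] [DecidableEq Q₁]
    (src tgt : Q₁ → Q₀) (hconn : QuiverConnected src tgt)
    (θ : (Q₀ → ℤ) →ₗ[ℤ] ℤ) (hθ : θ (fun _ => 1) = 0) (α₀ : Q₁) :
    ((∃ n : ℤ, 1 < n ∧ ∃ μ : LamMinus src tgt, sMapZ src tgt (lambZ α₀) = n • μ) →
      sMapZ src tgt (lambZ α₀) = 0) ∧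
    (({α₀} : Finset Q₁) ∈ PhiTheta src tgt θ →
      sMapZ src tgt (lambZ α₀) ≠ 0 ∧
      ¬∃ n : ℤ, 1 < n ∧ ∃ μ : LamMinus src tgt, sMapZ src tgt (lambZ α₀) = n • μ) := by
  refine ⟨?_, fun h => ⟨?_, ?_⟩⟩
  · rintro ⟨n, hn, μ, h⟩
    obtain ⟨I, h1, h2, h3⟩ := exists_cut src tgt α₀ n hn μ h
    exact zero_of_cut src tgt α₀ I h1 h2 h3
  · have := nonzero_of_phi src tgt θ hθ α₀ h 2 (by norm_num) 0
    rwa [smul_zero] at this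
  · rintro ⟨n, hn, μ, h'⟩
    exact nonzero_of_phi src tgt θ hθ α₀ h n hn μ h'
end
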